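/- The single-conclusion logic ⊢_⊞ is not finitely axiomatizable: there is no finite set R of single-conclusion rules, each having a finite set of premises, such that ⊢_R = ⊢_⊞. -/

import Mathlib

/-- Formulas built from countably many propositional variables with a single
binary connective `⊞` (platypus). -/
inductive Fm : Type where
  | var : ℕ → Fm
  | pl : Fm → Fm → Fm
deriving DecidableEq

namespace Fm

/-- The set of propositional variables occurring in a formula. -/
def vars : Fm → Set ℕ
  | var n => {n}
  | pl a b => vars a ∪ vars b

/-- A `𝔅_⊞`-valuation: a two-valued function such that
`v (φ ⊞ ψ) ∈ {min (v φ) (v ψ), max (v φ) (v ψ)}`. -/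
def IsVal (v : Fm → Bool) : Prop :=
  ∀ a b : Fm, v (a.pl b) = (v a && v b) ∨ v (a.pl b) = (v a || v b)

/-- The multiple-conclusion consequence `Γ ⊩_⊞ Δ`. -/
def Mc (Γ Δ : Set Fm) : Prop :=
  ∀ v : Fm → Bool, IsVal v → (∀ φ ∈ Γ, v φ = true) → ∃ ψ ∈ Δ, v ψ = true

/-- The single-conclusion consequence `Γ ⊢_⊞ φ`. -/
def Sc (Γ : Set Fm) (φ : Fm) : Prop := Mc Γ {φ}

end Fm

namespace Fm

/-- Homomorphic extension of a substitution `σ : P → L_⊞` to formulas. -/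
def subst (σ : ℕ → Fm) : Fm → Fm
  | var n => σ n
  | pl a b => (subst σ a).pl (subst σ b)

/-- Hilbert derivability from a set `R` of single-conclusion rules: `φ`
belongs to the smallest set containing `Γ` and closed under substitution
instances of the rules in `R`. -/
inductive Der (R : Set (Set Fm × Fm)) (Γ : Set Fm) : Fm → Prop
  | prem {φ : Fm} : φ ∈ Γ → Der R Γ φ
  | app {Prem : Set Fm} {ψ : Fm} (σ : ℕ → Fm) : (Prem, ψ) ∈ R →
      (∀ π ∈ Prem, Der R Γ (subst σ π)) → Der R Γ (subst σ ψ)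

end Fm

namespace Fm

/-- index of a chain -/
def ix : Fm → Option ℕ
  | var _ => some 0
  | pl (var _) b => (ix b).map Nat.succ
  | pl (pl _ _) _ => none

def ev (g : ℕ → Bool) : Fm → Bool
  | var _ => g 0
  | pl a b => match ix (pl a b) with
    | some l => g l
    | none => ev g a && ev g b

def gg (f m l : ℕ) : Bool := !(if m < f then decide (l < f) else decide (f ≤ l ∧ l ≤ m))

def ch : ℕ → Fm
  | 0 => var 0
  | n+1 => pl (var 0) (ch n)

def sub : Fm → Finset Fm
  | var n => {var n}
  | pl a b => {pl a b} ∪ (sub a ∪ sub b)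

theorem self_mem_sub (a : Fm) : a ∈ sub a := by
  cases a <;> simp [sub]

theorem sub_closed {x a b : Fm} (h : pl a b ∈ sub x) : a ∈ sub x ∧ b ∈ sub x := by
  induction x with
  | var n => simp [sub] at h
  | pl c d ihc ihd =>
    simp only [sub, Finset.mem_union, Finset.mem_singleton] at h ⊢
    rcases h with h | h | h
    · cases h
      exact ⟨Or.inr (Or.inl (self_mem_sub _)), Or.inr (Or.inr (self_mem_sub _))⟩
    · have := ihc h; tauto
    · have := ihd h; tauto

theorem ix_ch (n : ℕ) : ix (ch n) = some n := by
  induction n with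
  | zero => rfl
  | succ n ih => simp [ch, ix, ih]

theorem ev_ix (g : ℕ → Bool) {a : Fm} {l : ℕ} (h : ix a = some l) : ev g a = g l := by
  cases a with
  | var n => simp [ix] at h; subst h; rfl
  | pl a b => simp [ev, h]

theorem ev_none (g : ℕ → Bool) {a b : Fm} (h : ix (pl a b) = none) :
    ev g (pl a b) = (ev g a && ev g b) := by
  simp [ev, h]

theorem ev_pl (f m : ℕ) (hf1 : 1 ≤ f) (a b : Fm) (h : ix (pl a b) ≠ some f) :
    ev (gg f m) (pl a b) = (ev (gg f m) a && ev (gg f m) b) ∨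
    ev (gg f m) (pl a b) = (ev (gg f m) a || ev (gg f m) b) := by
  rcases hi : ix (pl a b) with _ | l
  · exact Or.inl (ev_none _ hi)
  · cases a with
    | pl c d => simp [ix] at hi
    | var k =>
      have hi' := hi
      simp only [ix, Option.map_eq_some_iff] at hi'
      obtain ⟨l', hl', rfl⟩ := hi'
      rw [ev_ix _ hi, ev_ix _ hl', ev_ix (a := var k) (l := 0) _ rfl]
      have hf : l' + 1 ≠ f := fun e => h (by rw [hi, ← e])
      unfold gg
      by_cases h1 : m < f
      · simp only [h1, if_true]
        by_cases h2 : l' < f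
        · have h3 : l'.succ < f := by omega
          simp [h2, h3]
        · have h3 : ¬ l'.succ < f := by omega
          have h4 : 0 < f := by omega
          simp [h2, h3, h4]
      · simp only [h1, if_false]
        have h0 : ¬ f = 0 := by omega
        have h0' : ¬ (f ≤ 0) := by omega
        by_cases h2 : f ≤ l' ∧ l' ≤ m
        · simp [h0, h2]; omega
        · have h3 : ¬ (f ≤ l'.succ ∧ l'.succ ≤ m) := by omega
          simp only [h2, h3, h0']
          simp

theorem ev_false {n f m : ℕ} (hf : f ≤ n) (hm : m < n) {x : Fm}
    (h : ev (gg f m) x = false) : ∃ m' < n, ∀ f, 1 ≤ f → ev (gg f m') x = false := by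
  induction x with
  | var k =>
    refine ⟨0, by omega, fun f hf => ?_⟩
    have : 0 < f := hf
    simp [ev, gg, this]
  | pl a b iha ihb =>
    rcases hi : ix (pl a b) with _ | l
    · rw [ev_none _ hi, Bool.and_eq_false_iff] at h
      rcases h with h | h
      · obtain ⟨m', h1, h2⟩ := iha h
        exact ⟨m', h1, fun f hf => by rw [ev_none _ hi, h2 f hf]; rfl⟩
      · obtain ⟨m', h1, h2⟩ := ihb h
        exact ⟨m', h1, fun f hf => by rw [ev_none _ hi, h2 f hf]; simp⟩
    · rw [ev_ix _ hi] at h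
      refine ⟨l, ?_, fun f hf => ?_⟩
      · unfold gg at h
        split_ifs at h <;> simp at h <;> omega
      · rw [ev_ix _ hi]
        unfold gg
        split_ifs with h1
        · simp [h1]
        · simp; omega

open Classical in
/-- a genuine valuation agreeing with `e ∘ subst σ` on `S` -/
noncomputable def ww (S : Finset Fm) (e : Fm → Bool) (σ : ℕ → Fm) : Fm → Bool
  | var n => e (σ n)
  | pl a b => if pl a b ∈ S then e (subst σ (pl a b)) else
      (ww S e σ a && ww S e σ b)

theorem ww_eq (S : Finset Fm) (e : Fm → Bool) (σ : ℕ → Fm) {x : Fm} (h : x ∈ S) :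
    ww S e σ x = e (subst σ x) := by
  cases x with
  | var n => rfl
  | pl a b => simp [ww, h]

theorem subst_var (x : Fm) : subst var x = x := by
  induction x with
  | var n => rfl
  | pl a b iha ihb => simp [subst, iha, ihb]

theorem main_step (S : Finset Fm) (hS : ∀ a b, pl a b ∈ S → a ∈ S ∧ b ∈ S)
    (Prem : Set Fm) (ψ : Fm) (hP : ∀ x ∈ Prem, x ∈ S) (hψ : ψ ∈ S) (hsc : Sc Prem ψ)
    (σ : ℕ → Fm) (n : ℕ) (hn : S.card < n)
    (hT : ∀ x ∈ Prem, ∀ f m, 1 ≤ f → f ≤ n → m < n → ev (gg f m) (subst σ x) = true) :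
    ∀ f m, 1 ≤ f → f ≤ n → m < n → ev (gg f m) (subst σ ψ) = true := by
  intro f₀ m₀ _ h2 h3
  by_contra hc
  rw [Bool.not_eq_true] at hc
  obtain ⟨m, hm, hall⟩ := ev_false h2 h3 hc
  obtain ⟨f, hfI, hfS⟩ : ∃ f ∈ Finset.Icc 1 n,
      f ∉ S.image (fun x => (ix (subst σ x)).getD 0) := by
    apply Finset.exists_mem_notMem_of_card_lt_card
    refine lt_of_le_of_lt Finset.card_image_le ?_
    simpa using hn
  rw [Finset.mem_Icc] at hfI
  have hvis : ∀ x ∈ S, ix (subst σ x) ≠ some f := by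
    intro x hx he
    exact hfS (Finset.mem_image.2 ⟨x, hx, by simp [he]⟩)
  have hval : IsVal (ww S (ev (gg f m)) σ) := by
    intro a b
    by_cases hab : pl a b ∈ S
    · obtain ⟨ha, hb⟩ := hS a b hab
      rw [ww_eq _ _ _ hab, ww_eq _ _ _ ha, ww_eq _ _ _ hb]
      exact ev_pl f m hfI.1 _ _ (hvis _ hab)
    · left; simp [ww, hab]
  obtain ⟨y, hy, hy'⟩ := hsc _ hval (fun x hx => by
    rw [ww_eq _ _ _ (hP x hx)]; exact hT x hx f m hfI.1 hfI.2 hm)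
  rw [Set.mem_singleton_iff] at hy
  subst hy
  rw [ww_eq _ _ _ hψ, hall f hfI.1] at hy'
  exact absurd hy' (by simp)

theorem sc_ch (n : ℕ) : Sc {ch n} (var 0) := by
  intro v hv h
  refine ⟨_, rfl, ?_⟩
  by_contra hc
  rw [Bool.not_eq_true] at hc
  have : ∀ n, v (ch n) = false := by
    intro n
    induction n with
    | zero => exact hc
    | succ n ih => rcases hv (var 0) (ch n) with h | h <;> simp [ch, h, hc, ih]
  have h1 := h (ch n) rfl
  rw [this n] at h1
  exact absurd h1 (by simp)

end Fm

open Fm in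
/-- `⊢_⊞` is not finitely axiomatizable: no finite set of
single-conclusion rules with finitely many premises axiomatizes it. -/
theorem platypus_not_finitely_axiomatizable :
    ¬ ∃ R : Set (Set Fm × Fm), R.Finite ∧ (∀ r ∈ R, r.1.Finite) ∧
      ∀ (Γ : Set Fm) (φ : Fm), Der R Γ φ ↔ Sc Γ φ := by
  rintro ⟨R, hR, hfin, hax⟩
  have hF : (⋃ r ∈ R, (r.1 ∪ {r.2})).Finite :=
    hR.biUnion (fun r hr => (hfin r hr).union (Set.finite_singleton _))
  let S : Finset Fm := hF.toFinset.biUnion sub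
  have hin : ∀ r ∈ R, ∀ x, x ∈ r.1 ∪ {r.2} → x ∈ S := by
    intro r hr x hx
    refine Finset.mem_biUnion.2 ⟨x, ?_, self_mem_sub x⟩
    rw [Set.Finite.mem_toFinset]
    exact Set.mem_biUnion hr hx
  have hS : ∀ a b, pl a b ∈ S → a ∈ S ∧ b ∈ S := by
    intro a b h
    obtain ⟨x, hx, h⟩ := Finset.mem_biUnion.1 h
    exact ⟨Finset.mem_biUnion.2 ⟨x, hx, (sub_closed h).1⟩,
      Finset.mem_biUnion.2 ⟨x, hx, (sub_closed h).2⟩⟩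
  have key : ∀ φ, Der R {ch (S.card + 1)} φ →
      ∀ f m, 1 ≤ f → f ≤ S.card + 1 → m < S.card + 1 → ev (gg f m) φ = true := by
    intro φ hd
    induction hd with
    | prem h =>
      rw [Set.mem_singleton_iff] at h
      subst h
      intro f m h1 h2 h3
      rw [ev_ix _ (ix_ch _)]
      unfold gg
      split_ifs
      · simp; omega
      · simp; omega
    | @app Prem ψ σ hr _ ih =>
      refine main_step S hS Prem ψ (fun x hx => hin _ hr x (Or.inl hx))
        (hin _ hr ψ (Or.inr rfl)) ?_ σ _ (Nat.lt_succ_self _) ih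
      rw [← hax]
      have := Der.app (R := R) (Γ := Prem) var hr
        (fun x hx => by rw [subst_var]; exact Der.prem hx)
      rwa [subst_var] at this
  have := key (var 0) ((hax _ _).2 (sc_ch _)) 1 0 le_rfl (by omega) (by omega)
  simp [ev, gg] at this
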